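/- arXiv:2604.22423 — 2 statements merged into one kernel-verified Lean document; each statement's English description precedes it below -/
import Mathlib

section
/- Let ℓ be a positive integer. In the permutation group of pairs (u,v) of vectors u, v : ZMod ℓ → ℂ, let G₁ be the subgroup generated by the pair shifts C_{i,j}(u,v) = (c_i(u), c_j(v)) for i,j ∈ ZMod ℓ, let G₂ be the subgroup generated by the pair decimations D_{k,r}(u,v) = (d_k(u), d_{(−1)^r·k}(v)) for k ∈ (ZMod ℓ)ˣ, r ∈ {0,1}, and let G₃ be the subgroup generated by the swap S(u,v) = (v,u). Then G₁ ∩ ⟨G₂, G₃⟩ is the trivial subgroup, where ⟨G₂, G₃⟩ is the subgroup generated by G₂ and G₃. -/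
/-!
The pair `(δ₀, δ₀)`, where `δ₀` is the indicator vector of `0`, is fixed by every decimation pair
(since `i * k⁻¹ = 0 ↔ i = 0`) and by the swap, hence by all of `⟨G₂, G₃⟩`. The pair shifts are
closed under products and inverses, so every element of `G₁` is a single `C_{i,j}`; it sends
`(δ₀, δ₀)` to `(δ_i, δ_j)`, and fixing that pair forces `i = j = 0`.
-/

/-- Cyclic shift by `j`: `(c_j v) i = v (i - j)`. -/
def cyc (ℓ : ℕ) (j : ZMod ℓ) : Equiv.Perm (ZMod ℓ → ℂ) where
  toFun v i := v (i - j)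
  invFun v i := v (i + j)
  left_inv v := by funext i; simp
  right_inv v := by funext i; simp

/-- Decimation by the unit `k`: `(d_k v) i = v (i * k⁻¹)`. -/
def dec (ℓ : ℕ) (k : (ZMod ℓ)ˣ) : Equiv.Perm (ZMod ℓ → ℂ) where
  toFun v i := v (i * ((k⁻¹ : (ZMod ℓ)ˣ) : ZMod ℓ))
  invFun v i := v (i * ((k : (ZMod ℓ)ˣ) : ZMod ℓ))
  left_inv v := by funext i; simp [mul_assoc, ← Units.val_mul]
  right_inv v := by funext i; simp [mul_assoc, ← Units.val_mul]

/-- The swap (switch) permutation `S (u, v) = (v, u)` on pairs of vectors. -/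
def swapP (ℓ : ℕ) : Equiv.Perm ((ZMod ℓ → ℂ) × (ZMod ℓ → ℂ)) :=
  Equiv.prodComm _ _

/-- The pair cyclic shift `C_{i,j} (u, v) = (c_i u, c_j v)`. -/
def shiftP (ℓ : ℕ) (i j : ZMod ℓ) : Equiv.Perm ((ZMod ℓ → ℂ) × (ZMod ℓ → ℂ)) :=
  (cyc ℓ i).prodCongr (cyc ℓ j)

/-- The pair decimation `D_{k,r} (u, v) = (d_k u, d_{(-1)^r k} v)`. -/
def decP (ℓ : ℕ) (k : (ZMod ℓ)ˣ) (r : ℕ) : Equiv.Perm ((ZMod ℓ → ℂ) × (ZMod ℓ → ℂ)) :=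
  (dec ℓ k).prodCongr (dec ℓ ((-1) ^ r * k))

theorem dec_single_zero (ℓ : ℕ) (k : (ZMod ℓ)ˣ) :
    dec ℓ k (Pi.single 0 1) = Pi.single 0 1 := by
  funext i
  simp [dec, Pi.single_apply]

theorem eq_zero_of_cyc_single_zero (ℓ : ℕ) (j : ZMod ℓ)
    (h : cyc ℓ j (Pi.single 0 1) = Pi.single 0 1) : j = 0 := by
  have h0 := congrFun h j
  by_contra hj
  simp [cyc, hj] at h0

theorem shiftP_zero (ℓ : ℕ) : shiftP ℓ 0 0 = 1 := by
  ext x i <;> simp [shiftP, cyc]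

theorem exists_eq_shiftP_of_mem_closure (ℓ : ℕ)
    {p : Equiv.Perm ((ZMod ℓ → ℂ) × (ZMod ℓ → ℂ))}
    (hp : p ∈ Subgroup.closure {p : Equiv.Perm ((ZMod ℓ → ℂ) × (ZMod ℓ → ℂ)) |
        ∃ i j : ZMod ℓ, p = shiftP ℓ i j}) :
    ∃ i j : ZMod ℓ, p = shiftP ℓ i j := by
  have hmul (i j i' j' : ZMod ℓ) :
      shiftP ℓ i j * shiftP ℓ i' j' = shiftP ℓ (i + i') (j + j') := by
    ext x n <;> simp [shiftP, cyc, sub_sub]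
  induction hp using Subgroup.closure_induction with
  | mem x hx => exact hx
  | one => exact ⟨0, 0, (shiftP_zero ℓ).symm⟩
  | mul x y _ _ hx hy =>
    obtain ⟨i, j, rfl⟩ := hx
    obtain ⟨i', j', rfl⟩ := hy
    exact ⟨_, _, hmul i j i' j'⟩
  | inv x _ hx =>
    obtain ⟨i, j, rfl⟩ := hx
    refine ⟨-i, -j, inv_eq_of_mul_eq_one_right ?_⟩
    rw [hmul, add_neg_cancel, add_neg_cancel, shiftP_zero]

/-- **`G₁ ∩ ⟨G₂, G₃⟩ = 1`.** In the permutation group of pairs of vectors, the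
subgroup generated by the pair shifts intersects the subgroup generated by the
pair decimations together with the swap trivially. -/
theorem shift_inf_decSwap_eq_bot (ℓ : ℕ) (hℓ : 0 < ℓ) :
    (Subgroup.closure {p : Equiv.Perm ((ZMod ℓ → ℂ) × (ZMod ℓ → ℂ)) |
        ∃ i j : ZMod ℓ, p = shiftP ℓ i j}) ⊓
      ((Subgroup.closure {p : Equiv.Perm ((ZMod ℓ → ℂ) × (ZMod ℓ → ℂ)) |
          ∃ k : (ZMod ℓ)ˣ, ∃ r : ℕ, (r = 0 ∨ r = 1) ∧ p = decP ℓ k r}) ⊔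
        (Subgroup.closure {swapP ℓ})) = ⊥ := by
  rw [eq_bot_iff]
  rintro p ⟨hp₁, hp₂⟩
  have hle : (Subgroup.closure {p : Equiv.Perm ((ZMod ℓ → ℂ) × (ZMod ℓ → ℂ)) |
        ∃ k : (ZMod ℓ)ˣ, ∃ r : ℕ, (r = 0 ∨ r = 1) ∧ p = decP ℓ k r}) ⊔
      (Subgroup.closure {swapP ℓ}) ≤
      MulAction.stabilizer (Equiv.Perm ((ZMod ℓ → ℂ) × (ZMod ℓ → ℂ)))
        ((Pi.single 0 1, Pi.single 0 1) : (ZMod ℓ → ℂ) × (ZMod ℓ → ℂ)) := by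
    refine sup_le ?_ ?_ <;> rw [Subgroup.closure_le]
    · rintro _ ⟨k, r, -, rfl⟩
      simp [MulAction.mem_stabilizer_iff, decP, dec_single_zero]
    · rintro _ rfl
      simp [MulAction.mem_stabilizer_iff, swapP]
  have hfix := hle hp₂
  obtain ⟨i, j, rfl⟩ := exists_eq_shiftP_of_mem_closure ℓ hp₁
  have hpair : cyc ℓ i (Pi.single 0 1) = Pi.single 0 1 ∧
      cyc ℓ j (Pi.single 0 1) = Pi.single 0 1 := by
    simpa [MulAction.mem_stabilizer_iff, shiftP] using hfix
  rw [eq_zero_of_cyc_single_zero ℓ i hpair.1, eq_zero_of_cyc_single_zero ℓ j hpair.2,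
    shiftP_zero]
  exact Subgroup.mem_bot.mpr rfl
end

section
/- Let ℓ be a positive integer. In the permutation group of pairs (u,v) of vectors u, v : ZMod ℓ → ℂ, let GG be the subgroup generated by all pair shifts C_{i,j}(u,v) = (c_i(u), c_j(v)) for i,j ∈ ZMod ℓ, all pair decimations D_{k,r}(u,v) = (d_k(u), d_{(−1)^r·k}(v)) for k ∈ (ZMod ℓ)ˣ, r ∈ {0,1}, and the swap S(u,v) = (v,u). Then every element g ∈ GG can be written in the form g = S^f ∘ D_{k,r} ∘ C_{i,j} for some f, r ∈ {0,1}, k ∈ (ZMod ℓ)ˣ, and i,j ∈ ZMod ℓ; equivalently, for every g ∈ GG and every pair (u,v), g(u,v) = S^f(d_k(c_i(u)), d_{(−1)^r·k}(c_j(v))) for some such f, r, k, i, j. -/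
theorem cyc_mul_cyc (ℓ : ℕ) (a b : ZMod ℓ) : cyc ℓ a * cyc ℓ b = cyc ℓ (a + b) := by
  ext v x
  simp [cyc, sub_sub]

theorem dec_mul_dec (ℓ : ℕ) (a b : (ZMod ℓ)ˣ) : dec ℓ a * dec ℓ b = dec ℓ (a * b) := by
  ext v x
  simp [dec, mul_assoc, mul_comm]

theorem cyc_mul_dec (ℓ : ℕ) (i : ZMod ℓ) (k : (ZMod ℓ)ˣ) :
    cyc ℓ i * dec ℓ k = dec ℓ k * cyc ℓ (i * ((k⁻¹ : (ZMod ℓ)ˣ) : ZMod ℓ)) := by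
  ext v x
  simp [cyc, dec, sub_mul]

theorem cyc_zero (ℓ : ℕ) : cyc ℓ 0 = 1 := by
  ext v x
  simp [cyc]

theorem dec_one (ℓ : ℕ) : dec ℓ 1 = 1 := by
  ext v x
  simp [dec]

theorem prodCongr_mul_prodCongr {α : Type*} (a b c d : Equiv.Perm α) :
    (a.prodCongr b : Equiv.Perm (α × α)) * (c.prodCongr d : Equiv.Perm (α × α)) =
      ((a * c : Equiv.Perm α).prodCongr (b * d : Equiv.Perm α) : Equiv.Perm (α × α)) := rfl

theorem prodCongr_one_one {α : Type*} :
    (((1 : Equiv.Perm α).prodCongr (1 : Equiv.Perm α)) : Equiv.Perm (α × α)) = 1 := rfl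

theorem swapP_mul_self (ℓ : ℕ) : swapP ℓ * swapP ℓ = 1 := rfl

theorem shiftP_mul_shiftP (ℓ : ℕ) (i j i' j' : ZMod ℓ) :
    shiftP ℓ i j * shiftP ℓ i' j' = shiftP ℓ (i + i') (j + j') := by
  simp only [shiftP, prodCongr_mul_prodCongr, cyc_mul_cyc]

theorem decP_mul_decP (ℓ : ℕ) (k k' : (ZMod ℓ)ˣ) (r r' : ℕ) :
    decP ℓ k r * decP ℓ k' r' = decP ℓ (k * k') (r + r') := by
  simp only [decP, prodCongr_mul_prodCongr, dec_mul_dec, pow_add, mul_mul_mul_comm]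

theorem neg_one_pow_mul_self (ℓ r : ℕ) : ((-1 : (ZMod ℓ)ˣ)) ^ r * (-1) ^ r = 1 := by
  rw [← mul_pow]; simp

theorem decP_one (ℓ : ℕ) (r : ℕ) : decP ℓ 1 (r + r) = 1 := by
  simp only [decP, pow_add, neg_one_pow_mul_self, mul_one, dec_one, prodCongr_one_one]

theorem shiftP_mul_swapP (ℓ : ℕ) (i j : ZMod ℓ) :
    shiftP ℓ i j * swapP ℓ = swapP ℓ * shiftP ℓ j i := rfl

theorem decP_mul_swapP (ℓ : ℕ) (k : (ZMod ℓ)ˣ) (r : ℕ) :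
    decP ℓ k r * swapP ℓ = swapP ℓ * decP ℓ ((-1) ^ r * k) r := by
  have h : (-1 : (ZMod ℓ)ˣ) ^ r * ((-1) ^ r * k) = k := by
    rw [← mul_assoc, neg_one_pow_mul_self, one_mul]
  unfold decP
  rw [h]
  rfl

theorem shiftP_mul_decP (ℓ : ℕ) (i j : ZMod ℓ) (k : (ZMod ℓ)ˣ) (r : ℕ) :
    shiftP ℓ i j * decP ℓ k r = decP ℓ k r *
      shiftP ℓ (i * ((k⁻¹ : (ZMod ℓ)ˣ) : ZMod ℓ))
        (j * ((((-1) ^ r * k)⁻¹ : (ZMod ℓ)ˣ) : ZMod ℓ)) := by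
  simp only [shiftP, decP, prodCongr_mul_prodCongr, cyc_mul_dec]

/-- The normal form `S^f D_{k,r} C_{i,j}`, with arbitrary natural exponents `f` and `r`. -/
def IsNormalForm (ℓ : ℕ) (g : Equiv.Perm ((ZMod ℓ → ℂ) × (ZMod ℓ → ℂ))) : Prop :=
  ∃ (f r : ℕ) (k : (ZMod ℓ)ˣ) (i j : ZMod ℓ), g = swapP ℓ ^ f * decP ℓ k r * shiftP ℓ i j

theorem IsNormalForm.swapP_mul {ℓ : ℕ} {g : Equiv.Perm ((ZMod ℓ → ℂ) × (ZMod ℓ → ℂ))}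
    (hg : IsNormalForm ℓ g) : IsNormalForm ℓ (swapP ℓ * g) := by
  obtain ⟨f, r, k, i, j, rfl⟩ := hg
  exact ⟨f + 1, r, k, i, j, by simp only [pow_succ', mul_assoc]⟩

theorem decP_mul_swapP_pow (ℓ : ℕ) (f r : ℕ) (k : (ZMod ℓ)ˣ) :
    ∃ k', decP ℓ k r * swapP ℓ ^ f = swapP ℓ ^ f * decP ℓ k' r := by
  induction f generalizing k with
  | zero => exact ⟨k, by simp⟩
  | succ f ih =>
    obtain ⟨k', h⟩ := ih ((-1) ^ r * k)
    exact ⟨k', by rw [pow_succ', ← mul_assoc, decP_mul_swapP, mul_assoc, h, mul_assoc]⟩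

theorem shiftP_mul_swapP_pow (ℓ : ℕ) (f : ℕ) (i j : ZMod ℓ) :
    ∃ i' j', shiftP ℓ i j * swapP ℓ ^ f = swapP ℓ ^ f * shiftP ℓ i' j' := by
  induction f generalizing i j with
  | zero => exact ⟨i, j, by simp⟩
  | succ f ih =>
    obtain ⟨i', j', h⟩ := ih j i
    exact ⟨i', j', by rw [pow_succ', ← mul_assoc, shiftP_mul_swapP, mul_assoc, h, mul_assoc]⟩

theorem IsNormalForm.decP_mul {ℓ : ℕ} {g : Equiv.Perm ((ZMod ℓ → ℂ) × (ZMod ℓ → ℂ))}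
    (hg : IsNormalForm ℓ g) (k : (ZMod ℓ)ˣ) (r : ℕ) : IsNormalForm ℓ (decP ℓ k r * g) := by
  obtain ⟨f, r', k', i, j, rfl⟩ := hg
  obtain ⟨k₁, h⟩ := decP_mul_swapP_pow ℓ f r k
  refine ⟨f, r + r', k₁ * k', i, j, ?_⟩
  rw [← decP_mul_decP, ← mul_assoc, ← mul_assoc, h, ← mul_assoc]

theorem IsNormalForm.shiftP_mul {ℓ : ℕ} {g : Equiv.Perm ((ZMod ℓ → ℂ) × (ZMod ℓ → ℂ))}
    (hg : IsNormalForm ℓ g) (i j : ZMod ℓ) : IsNormalForm ℓ (shiftP ℓ i j * g) := by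
  obtain ⟨f, r, k, i', j', rfl⟩ := hg
  obtain ⟨i₁, j₁, h⟩ := shiftP_mul_swapP_pow ℓ f i j
  refine ⟨f, r, k, i₁ * ((k⁻¹ : (ZMod ℓ)ˣ) : ZMod ℓ) + i',
    j₁ * ((((-1) ^ r * k)⁻¹ : (ZMod ℓ)ˣ) : ZMod ℓ) + j', ?_⟩
  rw [← mul_assoc, ← mul_assoc, h, mul_assoc (swapP ℓ ^ f), shiftP_mul_decP, ← mul_assoc,
    mul_assoc, shiftP_mul_shiftP]

/-- Both exponents of a normal form may be reduced modulo `2`, since `S² = 1` and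
`(-1)² = 1`. -/
theorem IsNormalForm.exists_reduced {ℓ : ℕ} {g : Equiv.Perm ((ZMod ℓ → ℂ) × (ZMod ℓ → ℂ))}
    (hg : IsNormalForm ℓ g) :
    ∃ f : ℕ, (f = 0 ∨ f = 1) ∧ ∃ r : ℕ, (r = 0 ∨ r = 1) ∧
      ∃ k : (ZMod ℓ)ˣ, ∃ i j : ZMod ℓ, g = (swapP ℓ) ^ f * decP ℓ k r * shiftP ℓ i j := by
  obtain ⟨f, r, k, i, j, rfl⟩ := hg
  refine ⟨f % 2, Nat.mod_two_eq_zero_or_one f, r % 2, Nat.mod_two_eq_zero_or_one r, k, i, j, ?_⟩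
  have hS : swapP ℓ ^ f = swapP ℓ ^ (f % 2) :=
    pow_eq_pow_mod f (by rw [pow_two, swapP_mul_self])
  have hD : decP ℓ k r = decP ℓ k (r % 2) := by
    unfold decP
    rw [pow_eq_pow_mod r (by simp : (-1 : (ZMod ℓ)ˣ) ^ 2 = 1)]
  rw [hS, hD]

/-- **Normal form in `GG`.** Every element of the group `GG` generated by all pair
shifts, all pair decimations, and the swap factors as `S^f ∘ D_{k,r} ∘ C_{i,j}`
for some `f, r ∈ {0,1}`, `k ∈ (ZMod ℓ)ˣ`, and `i, j ∈ ZMod ℓ`. -/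
theorem GG_normal_form (ℓ : ℕ) (hℓ : 0 < ℓ) :
    ∀ g ∈ Subgroup.closure
        ({p : Equiv.Perm ((ZMod ℓ → ℂ) × (ZMod ℓ → ℂ)) | ∃ i j : ZMod ℓ, p = shiftP ℓ i j} ∪
         {p | ∃ k : (ZMod ℓ)ˣ, ∃ r : ℕ, (r = 0 ∨ r = 1) ∧ p = decP ℓ k r} ∪
         {swapP ℓ}),
      ∃ f : ℕ, (f = 0 ∨ f = 1) ∧ ∃ r : ℕ, (r = 0 ∨ r = 1) ∧
        ∃ k : (ZMod ℓ)ˣ, ∃ i j : ZMod ℓ,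
          g = (swapP ℓ) ^ f * decP ℓ k r * shiftP ℓ i j := by
  intro g hg
  refine IsNormalForm.exists_reduced ?_
  induction hg using Subgroup.closure_induction_left with
  | one => exact ⟨0, 0, 1, 0, 0, by rw [shiftP_zero, decP_one ℓ 0, pow_zero, mul_one, mul_one]⟩
  | mul_left x hx y _ ih =>
    rcases hx with (⟨i, j, rfl⟩ | ⟨k, r, _, rfl⟩) | rfl
    · exact ih.shiftP_mul i j
    · exact ih.decP_mul k r
    · exact ih.swapP_mul
  | inv_mul_cancel x hx y _ ih =>
    rcases hx with (⟨i, j, rfl⟩ | ⟨k, r, _, rfl⟩) | rfl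
    · have h : (shiftP ℓ i j)⁻¹ = shiftP ℓ (-i) (-j) :=
        inv_eq_of_mul_eq_one_right (by
          rw [shiftP_mul_shiftP, add_neg_cancel, add_neg_cancel, shiftP_zero])
      rw [h]
      exact ih.shiftP_mul _ _
    · have h : (decP ℓ k r)⁻¹ = decP ℓ k⁻¹ r :=
        inv_eq_of_mul_eq_one_right (by rw [decP_mul_decP, mul_inv_cancel, decP_one])
      rw [h]
      exact ih.decP_mul _ _
    · rw [inv_eq_of_mul_eq_one_right (swapP_mul_self ℓ)]
      exact ih.swapP_mul
end
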